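/- arXiv:0806.4885 — 2 statements merged into one kernel-verified Lean document; each statement's English description precedes it below -/
import Mathlib

section
/- Let u : ℝ^N → ℝ be a C² function with DV ≡ 0 on U, where U = {x : ∇u(x) ≠ 0} and V = ∇u/‖∇u‖, and let p ∈ U. Then the connected component of the level set {x ∈ ℝ^N : u(x) = u(p)} containing p is exactly the affine hyperplane P = {x ∈ ℝ^N : ⟨x − p, ∇u(p)⟩ = 0}; moreover P ⊆ U, and both ∇u and ‖∇u‖ are constant along P (with ‖∇u‖ > 0 there). -/
open RealInnerProductSpace MeasureTheory Filter

/-- The Hessian bilinear form of `u : ℝ^N → ℝ` at `x`, applied to `w₁, w₂`. -/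
noncomputable def Hess {N : ℕ} (u : EuclideanSpace ℝ (Fin N) → ℝ)
    (x w₁ w₂ : EuclideanSpace ℝ (Fin N)) : ℝ :=
  fderiv ℝ (fun y => fderiv ℝ u y w₁) x w₂

/-- The Laplacian `Δu = tr Hess u`. -/
noncomputable def Lap {N : ℕ} (u : EuclideanSpace ℝ (Fin N) → ℝ)
    (x : EuclideanSpace ℝ (Fin N)) : ℝ :=
  ∑ i : Fin N, Hess u x (EuclideanSpace.single i 1) (EuclideanSpace.single i 1)

/-- The normalized gradient `V = ∇u / ‖∇u‖` (junk value `0` where `∇u = 0`). -/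
noncomputable def NGrad {N : ℕ} (u : EuclideanSpace ℝ (Fin N) → ℝ)
    (x : EuclideanSpace ℝ (Fin N)) : EuclideanSpace ℝ (Fin N) :=
  ‖gradient u x‖⁻¹ • gradient u x

/-- The squared Frobenius norm of a linear map on `ℝ^N`. -/
noncomputable def FrobSq {N : ℕ}
    (A : EuclideanSpace ℝ (Fin N) →L[ℝ] EuclideanSpace ℝ (Fin N)) : ℝ :=
  ∑ i : Fin N, ‖A (EuclideanSpace.single i 1)‖ ^ 2

/-- The divergence `div Z = ∑ i ∂Zᵢ/∂xᵢ` of a vector field on `ℝ^N`. -/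
noncomputable def Divg {N : ℕ} (Z : EuclideanSpace ℝ (Fin N) → EuclideanSpace ℝ (Fin N))
    (x : EuclideanSpace ℝ (Fin N)) : ℝ :=
  ∑ i : Fin N, ⟪fderiv ℝ Z x (EuclideanSpace.single i 1), EuclideanSpace.single i 1⟫

/-- The Frobenius inner product `⟨A, B⟩_F = ∑ᵢⱼ Aᵢⱼ Bᵢⱼ` of two linear maps on `ℝ^N`. -/
noncomputable def FrobInner {N : ℕ}
    (A B : EuclideanSpace ℝ (Fin N) →L[ℝ] EuclideanSpace ℝ (Fin N)) : ℝ :=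
  ∑ i : Fin N, ⟪A (EuclideanSpace.single i 1), B (EuclideanSpace.single i 1)⟫

/-!
Near a point `q` with `∇u(q) ≠ 0` the direction of `∇u` is constant, so by the mean value theorem
the level sets of `u` near `q` are exactly the slices orthogonal to `∇u(q)`. Hence `u` is locally
invariant under small translations orthogonal to `∇u(q)`, and therefore so is `∇u`. Thus the subset
of the hyperplane `P` where `∇u = ∇u(p)` is open in `P`; it is also closed, so it is all of `P`, and
`u` is constant on `P`. Finally `P` is connected and closed, and the local description of the level
sets makes it open in `{u = u(p)}`, so it is a connected component.
-/

open scoped Gradient Topology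

theorem subset_of_isPreconnected_of_isClosed_of_mem_nhdsWithin {X : Type*} [TopologicalSpace X]
    {S T : Set X} {p : X} (hS : IsPreconnected S) (hT : IsClosed T) (hpS : p ∈ S) (hpT : p ∈ T)
    (h : ∀ x ∈ S ∩ T, T ∈ 𝓝[S] x) : S ⊆ T := by
  have : PreconnectedSpace S := isPreconnected_iff_preconnectedSpace.1 hS
  have hopen : IsOpen ((↑) ⁻¹' T : Set S) :=
    isOpen_iff_mem_nhds.2 fun x hx => preimage_coe_mem_nhds_subtype.2 (h x ⟨x.2, hx⟩)
  have hclopen : IsClopen ((↑) ⁻¹' T : Set S) := ⟨hT.preimage continuous_subtype_val, hopen⟩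
  exact fun x hx => Set.eq_univ_iff_forall.1 (hclopen.eq_univ ⟨⟨p, hpS⟩, hpT⟩) ⟨x, hx⟩

section OrthogonalHyperplane

variable {E : Type*} [NormedAddCommGroup E] [InnerProductSpace ℝ E] {p q n : E}

theorem inner_normalize_right_eq_zero_iff (v x : E) :
    ⟪x, NormedSpace.normalize v⟫ = 0 ↔ ⟪x, v⟫ = 0 := by
  rcases eq_or_ne v 0 with rfl | hv
  · simp
  · simp [NormedSpace.normalize, real_inner_smul_right, hv]

/-- The affine hyperplane through `p` with normal vector `n`, the candidate for the connected
component of a level set; it is the whole space when `n = 0`. -/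
def orthogonalHyperplane (p n : E) : Set E :=
  {x | ⟪x - p, n⟫ = 0}

theorem self_mem_orthogonalHyperplane (p n : E) : p ∈ orthogonalHyperplane p n := by
  simp [orthogonalHyperplane]

theorem orthogonalHyperplane_eq_of_mem (hq : q ∈ orthogonalHyperplane p n) :
    orthogonalHyperplane q n = orthogonalHyperplane p n := by
  ext x
  have hqp : ⟪q - p, n⟫ = 0 := hq
  change ⟪x - q, n⟫ = 0 ↔ ⟪x - p, n⟫ = 0
  rw [← sub_add_sub_cancel x q p, inner_add_left, hqp, add_zero]

theorem isClosed_orthogonalHyperplane (p n : E) : IsClosed (orthogonalHyperplane p n) :=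
  isClosed_eq (by fun_prop) continuous_const

theorem convex_orthogonalHyperplane (p n : E) : Convex ℝ (orthogonalHyperplane p n) := by
  have h : orthogonalHyperplane p n = {x | innerSL ℝ n x = ⟪n, p⟫} := by
    ext x
    simp [orthogonalHyperplane, inner_sub_left, sub_eq_zero, real_inner_comm]
  rw [h]
  exact convex_hyperplane (innerSL ℝ n).isLinear _

end OrthogonalHyperplane

section Gradient

variable {E : Type*} [NormedAddCommGroup E] [InnerProductSpace ℝ E] [CompleteSpace E] {u : E → ℝ}

theorem contDiff_gradient {m k : WithTop ℕ∞} (hu : ContDiff ℝ k u) (hmk : m + 1 ≤ k) :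
    ContDiff ℝ m (∇ u) :=
  (InnerProductSpace.toDual ℝ E).symm.toContinuousLinearEquiv.contDiff.comp (hu.fderiv_right hmk)

theorem gradient_comp_add_right (u : E → ℝ) (a x : E) :
    ∇ (fun y => u (y + a)) x = ∇ u (x + a) := by
  simp only [gradient, fderiv_comp_add_right]

theorem exists_mem_segment_sub_eq_inner_gradient (hu : Differentiable ℝ u) (x y : E) :
    ∃ z ∈ segment ℝ x y, u y - u x = ⟪y - x, ∇ u z⟫ := by
  obtain ⟨z, hz, h⟩ := domain_mvt (fun z _ => (hu z).hasFDerivAt.hasFDerivWithinAt) convex_univ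
    (Set.mem_univ x) (Set.mem_univ y)
  exact ⟨z, hz, by rw [h, inner_gradient_right, conj_trivial]⟩

end Gradient

section ParallelNormalizedGradient

variable {E : Type*} [NormedAddCommGroup E] [InnerProductSpace ℝ E] [CompleteSpace E]
  {u : E → ℝ} {p q : E}

/-- The normalized gradient `V = ∇u / ‖∇u‖` is parallel on the set `∇u ≠ 0`. Differentiability of
`V` there is part of the notion, as `fderiv` vanishes at points of non-differentiability. -/
def HasParallelNormalizedGradient (u : E → ℝ) : Prop :=
  ∀ ⦃x⦄, ∇ u x ≠ 0 → HasFDerivAt (fun y => NormedSpace.normalize (∇ u y)) (0 : E →L[ℝ] E) x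

theorem hasParallelNormalizedGradient_of_fderiv_eq_zero (hu : ContDiff ℝ 2 u)
    (hDV : ∀ x, ∇ u x ≠ 0 → fderiv ℝ (fun y => NormedSpace.normalize (∇ u y)) x = 0) :
    HasParallelNormalizedGradient u := by
  intro x hx
  have hgrad : DifferentiableAt ℝ (∇ u) x :=
    (contDiff_gradient hu one_add_one_eq_two.le).differentiable one_ne_zero x
  have hV : DifferentiableAt ℝ (fun y => NormedSpace.normalize (∇ u y)) x :=
    ((hgrad.norm ℝ hx).inv (norm_ne_zero_iff.2 hx)).smul hgrad
  exact hDV x hx ▸ hV.hasFDerivAt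

namespace HasParallelNormalizedGradient

theorem eventually_normalize_gradient_eq (hV : HasParallelNormalizedGradient u)
    (hu : ContDiff ℝ 1 u) (hq : ∇ u q ≠ 0) :
    ∀ᶠ x in 𝓝 q, NormedSpace.normalize (∇ u x) = NormedSpace.normalize (∇ u q) := by
  have hcont : Continuous (∇ u) := (contDiff_gradient hu (zero_add 1).le).continuous
  obtain ⟨r, hr, hball⟩ := Metric.eventually_nhds_iff_ball.1 (hcont.continuousAt.eventually_ne hq)
  filter_upwards [Metric.ball_mem_nhds q hr] with x hx
  exact Metric.isOpen_ball.is_const_of_fderiv_eq_zero (convex_ball q r).isPreconnected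
    (fun y hy => (hV (hball y hy)).differentiableAt.differentiableWithinAt)
    (fun y hy => (hV (hball y hy)).fderiv) hx (Metric.mem_ball_self hr)

theorem eventually_eq_iff_inner_sub_gradient_eq_zero (hV : HasParallelNormalizedGradient u)
    (hu : ContDiff ℝ 1 u) (hq : ∇ u q ≠ 0) :
    ∀ᶠ z in 𝓝 (q, q), u z.1 = u z.2 ↔ ⟪z.1 - z.2, ∇ u q⟫ = 0 := by
  obtain ⟨r, hr, hball⟩ :=
    Metric.eventually_nhds_iff_ball.1 (hV.eventually_normalize_gradient_eq hu hq)
  have hmem := Metric.ball_mem_nhds q hr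
  filter_upwards [prod_mem_nhds hmem hmem] with ⟨x, y⟩ ⟨hx, hy⟩
  obtain ⟨z, hz, hmvt⟩ :=
    exists_mem_segment_sub_eq_inner_gradient (hu.differentiable one_ne_zero) y x
  have hz_ball : z ∈ Metric.ball q r := (convex_ball q r).segment_subset hy hx hz
  calc u x = u y ↔ ⟪x - y, ∇ u z⟫ = 0 := by rw [← sub_eq_zero, hmvt]
    _ ↔ ⟪x - y, ∇ u q⟫ = 0 := by
      rw [← inner_normalize_right_eq_zero_iff, hball z hz_ball, inner_normalize_right_eq_zero_iff]

theorem eventually_gradient_eq_of_mem_orthogonalHyperplane (hV : HasParallelNormalizedGradient u)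
    (hu : ContDiff ℝ 1 u) (hq : ∇ u q ≠ 0) :
    ∀ᶠ x in 𝓝 q, x ∈ orthogonalHyperplane q (∇ u q) → ∇ u x = ∇ u q := by
  have hshift : Tendsto (fun z : E × E => (z.2 + (z.1 - q), z.2)) (𝓝 (q, q)) (𝓝 (q, q)) :=
    Continuous.tendsto' (by fun_prop) _ _ (by simp)
  filter_upwards [(hshift.eventually
    (hV.eventually_eq_iff_inner_sub_gradient_eq_zero hu hq)).curry_nhds] with x hx hxq
  have hinvariant : (fun y => u (y + (x - q))) =ᶠ[𝓝 q] u :=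
    hx.mono fun y hy => hy.2 (by rwa [add_sub_cancel_left])
  simpa only [gradient_comp_add_right, add_sub_cancel] using hinvariant.gradient_eq

theorem gradient_eq_of_mem_orthogonalHyperplane (hV : HasParallelNormalizedGradient u)
    (hu : ContDiff ℝ 1 u) (hp : ∇ u p ≠ 0) {x : E} (hx : x ∈ orthogonalHyperplane p (∇ u p)) :
    ∇ u x = ∇ u p := by
  have hcont : Continuous (∇ u) := (contDiff_gradient hu (zero_add 1).le).continuous
  refine subset_of_isPreconnected_of_isClosed_of_mem_nhdsWithin (T := {y | ∇ u y = ∇ u p})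
    (convex_orthogonalHyperplane p (∇ u p)).isPreconnected (isClosed_eq hcont continuous_const)
    (self_mem_orthogonalHyperplane p _) rfl ?_ hx
  rintro q ⟨hqP, hqp : ∇ u q = ∇ u p⟩
  have hlocal := hV.eventually_gradient_eq_of_mem_orthogonalHyperplane hu (hqp ▸ hp)
  rw [hqp, orthogonalHyperplane_eq_of_mem hqP] at hlocal
  exact eventually_nhdsWithin_iff.2 hlocal

theorem apply_eq_of_mem_orthogonalHyperplane (hV : HasParallelNormalizedGradient u)
    (hu : ContDiff ℝ 1 u) (hp : ∇ u p ≠ 0) {x : E} (hx : x ∈ orthogonalHyperplane p (∇ u p)) :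
    u x = u p := by
  obtain ⟨z, hz, hmvt⟩ :=
    exists_mem_segment_sub_eq_inner_gradient (hu.differentiable one_ne_zero) p x
  have hzP : z ∈ orthogonalHyperplane p (∇ u p) :=
    (convex_orthogonalHyperplane p _).segment_subset (self_mem_orthogonalHyperplane p _) hx hz
  rw [hV.gradient_eq_of_mem_orthogonalHyperplane hu hp hzP] at hmvt
  exact sub_eq_zero.1 (hmvt.trans hx)

theorem orthogonalHyperplane_mem_nhdsWithin_levelSet (hV : HasParallelNormalizedGradient u)
    (hu : ContDiff ℝ 1 u) (hp : ∇ u p ≠ 0) (hq : q ∈ orthogonalHyperplane p (∇ u p)) :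
    orthogonalHyperplane p (∇ u p) ∈ 𝓝[{x | u x = u p}] q := by
  have hgrad := hV.gradient_eq_of_mem_orthogonalHyperplane hu hp hq
  have hlocal : ∀ᶠ y in 𝓝 q, u q = u y ↔ ⟪q - y, ∇ u q⟫ = 0 :=
    (hV.eventually_eq_iff_inner_sub_gradient_eq_zero hu (hgrad ▸ hp)).curry_nhds.self_of_nhds
  refine eventually_nhdsWithin_iff.2 (hlocal.mono fun y hy (hyp : u y = u p) => ?_)
  have hqy : q ∈ orthogonalHyperplane y (∇ u p) :=
    hgrad ▸ hy.1 ((hV.apply_eq_of_mem_orthogonalHyperplane hu hp hq).trans hyp.symm)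
  change y ∈ orthogonalHyperplane p (∇ u p)
  rw [← orthogonalHyperplane_eq_of_mem hq, orthogonalHyperplane_eq_of_mem hqy]
  exact self_mem_orthogonalHyperplane y _

theorem connectedComponentIn_levelSet_eq (hV : HasParallelNormalizedGradient u)
    (hu : ContDiff ℝ 1 u) (hp : ∇ u p ≠ 0) :
    connectedComponentIn {x | u x = u p} p = orthogonalHyperplane p (∇ u p) := by
  have hpP := self_mem_orthogonalHyperplane p (∇ u p)
  apply Set.Subset.antisymm
  · refine subset_of_isPreconnected_of_isClosed_of_mem_nhdsWithin
      isPreconnected_connectedComponentIn (isClosed_orthogonalHyperplane p _)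
      (mem_connectedComponentIn rfl) hpP fun x hx => ?_
    exact nhdsWithin_mono x (connectedComponentIn_subset _ p)
      (hV.orthogonalHyperplane_mem_nhdsWithin_levelSet hu hp hx.2)
  · exact (convex_orthogonalHyperplane p _).isPreconnected.subset_connectedComponentIn hpP
      fun x hx => hV.apply_eq_of_mem_orthogonalHyperplane hu hp hx

end HasParallelNormalizedGradient

theorem statement11_general (hu : ContDiff ℝ 1 u) (hV : HasParallelNormalizedGradient u)
    (hp : ∇ u p ≠ 0) :
    connectedComponentIn {x | u x = u p} p = orthogonalHyperplane p (∇ u p) ∧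
      orthogonalHyperplane p (∇ u p) ⊆ {x | ∇ u x ≠ 0} ∧
      (∀ x ∈ orthogonalHyperplane p (∇ u p), ∇ u x = ∇ u p ∧ ‖∇ u x‖ = ‖∇ u p‖) ∧
      0 < ‖∇ u p‖ := by
  have hgrad : ∀ x ∈ orthogonalHyperplane p (∇ u p), ∇ u x = ∇ u p :=
    fun x hx => hV.gradient_eq_of_mem_orthogonalHyperplane hu hp hx
  exact ⟨hV.connectedComponentIn_levelSet_eq hu hp, fun x hx => (hgrad x hx).trans_ne hp,
    fun x hx => ⟨hgrad x hx, congrArg norm (hgrad x hx)⟩, norm_pos_iff.2 hp⟩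

end ParallelNormalizedGradient

/-- flat-space instance of Lemma 3.4. If `DV ≡ 0` on `U = {∇u ≠ 0}`
and `p ∈ U`, the connected component through `p` of the level set `{u = u(p)}` is the
affine hyperplane `P = {x | ⟨x − p, ∇u(p)⟩ = 0}`; moreover `P ⊆ U` and `∇u` (hence
`‖∇u‖ > 0`) is constant along `P`. -/
theorem statement11 {N : ℕ} (hN : 1 ≤ N)
    (u : EuclideanSpace ℝ (Fin N) → ℝ) (hu : ContDiff ℝ 2 u)
    (hDV : ∀ x, gradient u x ≠ 0 → fderiv ℝ (NGrad u) x = 0)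
    (p : EuclideanSpace ℝ (Fin N)) (hp : gradient u p ≠ 0) :
    connectedComponentIn {x | u x = u p} p =
        {x : EuclideanSpace ℝ (Fin N) | ⟪x - p, gradient u p⟫ = 0} ∧
      {x : EuclideanSpace ℝ (Fin N) | ⟪x - p, gradient u p⟫ = 0} ⊆
        {x : EuclideanSpace ℝ (Fin N) | gradient u x ≠ 0} ∧
      (∀ x : EuclideanSpace ℝ (Fin N), ⟪x - p, gradient u p⟫ = 0 →
        gradient u x = gradient u p ∧ ‖gradient u x‖ = ‖gradient u p‖) ∧
      0 < ‖gradient u p‖ :=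
  statement11_general (hu.of_le one_le_two)
    (hasParallelNormalizedGradient_of_fderiv_eq_zero hu hDV) hp
end

section
/- Let f : ℝ → ℝ be continuously differentiable and let u : ℝ^N → ℝ be C³ with Δu + f(u) = 0 on ℝ^N and DV ≡ 0 on U = {x : ∇u(x) ≠ 0}, where V = ∇u/‖∇u‖. Let w ∈ ℝ^N with ‖w‖ = 1, p ∈ ℝ^N, γ(t) = p + t w, and h = u ∘ γ, and assume h is nonconstant on ℝ. Let (a, b) be a connected component of {t ∈ ℝ : γ(t) ∈ U}. Then the function t ↦ ⟨V(γ(t)), w⟩ is equal to a constant k on (a, b), k ≠ 0, h satisfies h''(t) + k² f(h(t)) = 0 for all t ∈ (a, b), and h is strictly monotone on (a, b). -/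
open RealInnerProductSpace MeasureTheory Filter

/-!
Since `V = ∇u / ‖∇u‖` is parallel, `D(∇u) = d‖∇u‖ ⊗ V` on `U`: the Hessian has rank one. Being
symmetric with `‖V‖ = 1`, it is a multiple of `V ⊗ V`, and taking traces the factor is `Δu`.
Along a line with direction `w` this reads `(∇u)' = (Δu ⟪V, w⟫) • V`, while `V` is constant on each
component of the set of parameters where `∇u ≠ 0`. Hence `h' = ⟪∇u, w⟫ = ‖∇u‖ k` has a sign and
`h'' = Δu k² = -k² f(h)`. If `k` were zero, `∇u` would be constant on the component, so it could not
vanish at an endpoint; the component would be the whole line and `h' = 0` everywhere.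
-/

section

open InnerProductSpace Laplacian
open scoped Gradient

lemma connectedComponentIn_preimage_eq_univ_of_forall_eq {X Y : Type*} [TopologicalSpace X]
    [LocallyConnectedSpace X] [PreconnectedSpace X] [TopologicalSpace Y] [T1Space Y]
    {g : X → Y} (hg : Continuous g) {V : Set Y} (hV : IsOpen V) {x : X} (hx : g x ∈ V)
    (hconst : ∀ y ∈ connectedComponentIn (g ⁻¹' V) x, g y = g x) :
    connectedComponentIn (g ⁻¹' V) x = Set.univ := by
  set C := connectedComponentIn (g ⁻¹' V) x
  have hxC : x ∈ C := mem_connectedComponentIn hx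
  have hclosure : closure C ⊆ g ⁻¹' {g x} :=
    closure_minimal hconst (isClosed_singleton.preimage hg)
  have hclosed : closure C ⊆ C :=
    isPreconnected_connectedComponentIn.closure.subset_connectedComponentIn (subset_closure hxC)
      (hclosure.trans (Set.preimage_mono (Set.singleton_subset_iff.2 hx)))
  exact IsClopen.eq_univ
    ⟨isClosed_of_closure_subset hclosed, (hV.preimage hg).connectedComponentIn⟩ ⟨x, hxC⟩

lemma eq_of_mem_connectedComponentIn_of_hasDerivAt_zero {𝕜 E : Type*} [RCLike 𝕜]
    [NormedAddCommGroup E] [NormedSpace 𝕜 E] {g : 𝕜 → E} {S : Set 𝕜} (hS : IsOpen S) {s t : 𝕜}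
    (hg : ∀ r ∈ connectedComponentIn S s, HasDerivAt g 0 r)
    (ht : t ∈ connectedComponentIn S s) : g t = g s :=
  hS.connectedComponentIn.is_const_of_deriv_eq_zero isPreconnected_connectedComponentIn
    (fun r hr => (hg r hr).differentiableAt.differentiableWithinAt) (fun r hr => (hg r hr).deriv)
    ht (mem_connectedComponentIn (connectedComponentIn_nonempty_iff.1 ⟨t, ht⟩))

lemma strictMonoOn_or_strictAntiOn_of_hasDerivAt_ne_zero {g g' : ℝ → ℝ} {s : Set ℝ}
    (hs : Convex ℝ s) (hg : ∀ t ∈ s, HasDerivAt g (g' t) t) (hg' : ∀ t ∈ s, g' t ≠ 0) :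
    StrictMonoOn g s ∨ StrictAntiOn g s := by
  have hcont : ContinuousOn g s := fun t ht => (hg t ht).continuousAt.continuousWithinAt
  have hderiv : ∀ t ∈ interior s, deriv g t = g' t := fun t ht =>
    (hg t (interior_subset ht)).deriv
  rcases hasDerivWithinAt_forall_lt_or_forall_gt_of_forall_ne hs
    (fun t ht => (hg t ht).hasDerivWithinAt) hg' with hneg | hpos
  · exact .inr (strictAntiOn_of_deriv_neg hs hcont fun t ht =>
      hderiv t ht ▸ hneg t (interior_subset ht))
  · exact .inl (strictMonoOn_of_deriv_pos hs hcont fun t ht =>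
      hderiv t ht ▸ hpos t (interior_subset ht))

lemma hasDerivAt_comp_line {𝕜 E F : Type*} [NontriviallyNormedField 𝕜] [NormedAddCommGroup E]
    [NormedSpace 𝕜 E] [NormedAddCommGroup F] [NormedSpace 𝕜 F] {G : E → F} {p w : E} {t : 𝕜}
    (hG : DifferentiableAt 𝕜 G (p + t • w)) :
    HasDerivAt (fun s : 𝕜 => G (p + s • w)) (fderiv 𝕜 G (p + t • w) w) t := by
  have hline : HasDerivAt (fun s : 𝕜 => p + s • w) w t := by
    simpa using ((hasDerivAt_id t).smul_const w).const_add p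
  exact hG.hasFDerivAt.comp_hasDerivAt t hline

section RankOne

variable {E : Type*} [NormedAddCommGroup E] [InnerProductSpace ℝ E]

lemma differentiableAt_normalize_comp {F : Type*} [NormedAddCommGroup F] [NormedSpace ℝ F]
    {G : F → E} {x : F} (hG : DifferentiableAt ℝ G x) (hx : G x ≠ 0) :
    DifferentiableAt ℝ (NormedSpace.normalize ∘ G) x :=
  ((hG.norm ℝ hx).inv (norm_ne_zero_iff.2 hx)).smul hG

lemma fderiv_eq_smulRight_normalize {F : Type*} [NormedAddCommGroup F] [NormedSpace ℝ F]
    {G : F → E} {x : F} (hG : DifferentiableAt ℝ G x) (hx : G x ≠ 0)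
    (hV : fderiv ℝ (NormedSpace.normalize ∘ G) x = 0) :
    fderiv ℝ G x = (fderiv ℝ (fun y => ‖G y‖) x).smulRight (NormedSpace.normalize (G x)) := by
  have hpolar : G = fun y => ‖G y‖ • (NormedSpace.normalize ∘ G) y :=
    funext fun y => (NormedSpace.norm_smul_normalize (G y)).symm
  conv_lhs => rw [hpolar]
  rw [fderiv_fun_smul (hG.norm ℝ hx) (differentiableAt_normalize_comp hG hx), hV, smul_zero,
    zero_add, Function.comp_apply]

lemma mul_norm_sq_eq_of_isSymmetric_smulRight {L : E →ₗ[ℝ] ℝ} {v : E}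
    (hL : (L.smulRight v).IsSymmetric) (z : E) : L z * ‖v‖ ^ 2 = L v * ⟪v, z⟫ := by
  have hsymm := hL z v
  simp only [LinearMap.smulRight_apply, real_inner_smul_left, real_inner_smul_right,
    real_inner_self_eq_norm_sq] at hsymm
  rw [hsymm, real_inner_comm]

end RankOne

section Gradient

variable {E : Type*} [NormedAddCommGroup E] [InnerProductSpace ℝ E]

lemma inner_fderiv_gradient [CompleteSpace E] (u : E → ℝ) (x v w : E) :
    ⟪fderiv ℝ (∇ u) x v, w⟫ = fderiv ℝ (fderiv ℝ u) x v w := by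
  have hgrad : ∇ u = (toDual ℝ E).symm.toContinuousLinearEquiv ∘ fderiv ℝ u := rfl
  rw [hgrad, ContinuousLinearEquiv.comp_fderiv]
  exact toDual_symm_apply

lemma isSymmetric_fderiv_gradient [CompleteSpace E] {u : E → ℝ} {x : E}
    (hu : IsSymmSndFDerivAt ℝ u x) : (fderiv ℝ (∇ u) x : E →ₗ[ℝ] E).IsSymmetric := fun v w => by
  rw [ContinuousLinearMap.coe_coe, inner_fderiv_gradient, real_inner_comm, inner_fderiv_gradient,
    hu.eq]

lemma differentiableAt_gradient [CompleteSpace E] {u : E → ℝ} {x : E} (hu : ContDiffAt ℝ 2 u x) :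
    DifferentiableAt ℝ (∇ u) x :=
  (toDual ℝ E).symm.differentiable.differentiableAt.comp x
    ((hu.fderiv_right (m := 1) le_rfl).differentiableAt one_ne_zero)

variable [FiniteDimensional ℝ E]

lemma laplacian_eq_trace_fderiv_gradient (u : E → ℝ) (x : E) :
    Δ u x = LinearMap.trace ℝ E (fderiv ℝ (∇ u) x) := by
  simp only [laplacian_eq_iteratedFDeriv_stdOrthonormalBasis, iteratedFDeriv_two_apply,
    LinearMap.trace_eq_sum_inner _ (stdOrthonormalBasis ℝ E), ContinuousLinearMap.coe_coe,
    real_inner_comm (fderiv ℝ (∇ u) x _), inner_fderiv_gradient, Matrix.cons_val_zero,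
    Matrix.cons_val_one]

lemma fderiv_gradient_apply_of_fderiv_normalize_eq_zero {u : E → ℝ} {x : E}
    (hu : ContDiffAt ℝ 2 u x) (hx : ∇ u x ≠ 0)
    (hV : fderiv ℝ (NormedSpace.normalize ∘ ∇ u) x = 0) (z : E) :
    fderiv ℝ (∇ u) x z =
      (Δ u x * ⟪NormedSpace.normalize (∇ u x), z⟫) • NormedSpace.normalize (∇ u x) := by
  set v := NormedSpace.normalize (∇ u x)
  set L : E →ₗ[ℝ] ℝ := (fderiv ℝ (fun y => ‖∇ u y‖) x).toLinearMap
  have hrank : (fderiv ℝ (∇ u) x : E →ₗ[ℝ] E) = L.smulRight v :=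
    congrArg _ (fderiv_eq_smulRight_normalize (differentiableAt_gradient hu) hx hV)
  have hsymm : (L.smulRight v).IsSymmetric :=
    hrank ▸ isSymmetric_fderiv_gradient (hu.isSymmSndFDerivAt (by simp))
  have hnorm : ‖v‖ = 1 := NormedSpace.norm_normalize_eq_one_iff.2 hx
  have hLv : Δ u x = L v := by
    rw [laplacian_eq_trace_fderiv_gradient, hrank, LinearMap.trace_smulRight]
  have hLz : L z = L v * ⟪v, z⟫ := by
    simpa [hnorm] using mul_norm_sq_eq_of_isSymmetric_smulRight hsymm z
  rw [hLv, ← hLz]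
  exact LinearMap.congr_fun hrank z

end Gradient

section Line

variable {E : Type*} [NormedAddCommGroup E] [InnerProductSpace ℝ E]

lemma normalize_comp_line_eq_of_mem_connectedComponentIn {F : Type*} [NormedAddCommGroup F]
    [NormedSpace ℝ F] {G : F → E} (hG : Differentiable ℝ G)
    (hV : ∀ x, G x ≠ 0 → fderiv ℝ (NormedSpace.normalize ∘ G) x = 0) {p w : F} {s t : ℝ}
    (ht : t ∈ connectedComponentIn {r : ℝ | G (p + r • w) ≠ 0} s) :
    NormedSpace.normalize (G (p + t • w)) = NormedSpace.normalize (G (p + s • w)) := by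
  have hopen : IsOpen {r : ℝ | G (p + r • w) ≠ 0} :=
    isOpen_ne_fun (hG.continuous.comp (by fun_prop)) continuous_const
  refine eq_of_mem_connectedComponentIn_of_hasDerivAt_zero
    (g := fun r => (NormedSpace.normalize ∘ G) (p + r • w)) hopen (fun r hr => ?_) ht
  have hr0 : G (p + r • w) ≠ 0 := connectedComponentIn_subset _ _ hr
  simpa [hV _ hr0] using hasDerivAt_comp_line (differentiableAt_normalize_comp (hG _) hr0)

lemma hasDerivAt_comp_line_inner_gradient [CompleteSpace E] {u : E → ℝ} {p w : E} {t : ℝ}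
    (hu : DifferentiableAt ℝ u (p + t • w)) :
    HasDerivAt (fun s : ℝ => u (p + s • w)) ⟪∇ u (p + t • w), w⟫ t := by
  rw [inner_gradient_left]
  exact hasDerivAt_comp_line hu

variable [FiniteDimensional ℝ E] {u : E → ℝ} {p w : E} {t : ℝ}

lemma hasDerivAt_gradient_comp_line_of_fderiv_normalize_eq_zero (hu : ContDiffAt ℝ 2 u (p + t • w))
    (ht : ∇ u (p + t • w) ≠ 0) (hV : fderiv ℝ (NormedSpace.normalize ∘ ∇ u) (p + t • w) = 0) :
    HasDerivAt (fun s : ℝ => ∇ u (p + s • w))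
      ((Δ u (p + t • w) * ⟪NormedSpace.normalize (∇ u (p + t • w)), w⟫) •
        NormedSpace.normalize (∇ u (p + t • w))) t := by
  rw [← fderiv_gradient_apply_of_fderiv_normalize_eq_zero hu ht hV]
  exact hasDerivAt_comp_line (differentiableAt_gradient hu)

lemma deriv_deriv_comp_line_of_fderiv_normalize_eq_zero
    (hu : ContDiff ℝ 2 u) (ht : ∇ u (p + t • w) ≠ 0)
    (hV : fderiv ℝ (NormedSpace.normalize ∘ ∇ u) (p + t • w) = 0) :
    deriv (deriv fun s : ℝ => u (p + s • w)) t =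
      ⟪NormedSpace.normalize (∇ u (p + t • w)), w⟫ ^ 2 * Δ u (p + t • w) := by
  have hderiv : (deriv fun s : ℝ => u (p + s • w)) = fun s => ⟪∇ u (p + s • w), w⟫ :=
    funext fun s => (hasDerivAt_comp_line_inner_gradient
      (hu.differentiable two_ne_zero _)).deriv
  have hgrad :=
    hasDerivAt_gradient_comp_line_of_fderiv_normalize_eq_zero hu.contDiffAt ht hV
  have hinner := hgrad.inner ℝ (hasDerivAt_const t w)
  rw [hderiv, hinner.deriv, inner_zero_right, zero_add, real_inner_smul_left]
  ring

lemma inner_normalize_gradient_ne_zero_of_comp_line_ne (hu : ContDiff ℝ 2 u)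
    (hV : ∀ x, ∇ u x ≠ 0 → fderiv ℝ (NormedSpace.normalize ∘ ∇ u) x = 0)
    (hne : ∃ r s : ℝ, u (p + r • w) ≠ u (p + s • w)) (ht : ∇ u (p + t • w) ≠ 0) :
    ⟪NormedSpace.normalize (∇ u (p + t • w)), w⟫ ≠ 0 := by
  intro hk
  have hgrad : Differentiable ℝ (∇ u) := fun _ => differentiableAt_gradient hu.contDiffAt
  have hcont : Continuous fun s : ℝ => ∇ u (p + s • w) := hgrad.continuous.comp (by fun_prop)
  have hconst : ∀ s ∈ connectedComponentIn {r : ℝ | ∇ u (p + r • w) ≠ 0} t,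
      ∇ u (p + s • w) = ∇ u (p + t • w) := fun s hs =>
    eq_of_mem_connectedComponentIn_of_hasDerivAt_zero (g := fun r : ℝ => ∇ u (p + r • w))
      (isOpen_ne_fun hcont continuous_const)
      (fun r hr => by
        have hr0 : ∇ u (p + r • w) ≠ 0 := connectedComponentIn_subset _ _ hr
        simpa [normalize_comp_line_eq_of_mem_connectedComponentIn hgrad hV hr, hk] using
          hasDerivAt_gradient_comp_line_of_fderiv_normalize_eq_zero hu.contDiffAt hr0
            (hV _ hr0)) hs
  have huniv := connectedComponentIn_preimage_eq_univ_of_forall_eq hcont isOpen_ne ht hconst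
  have horth : ⟪∇ u (p + t • w), w⟫ = 0 := by
    rw [← NormedSpace.norm_smul_normalize (∇ u (p + t • w)), real_inner_smul_left, hk, mul_zero]
  obtain ⟨r, s, hrs⟩ := hne
  have hderiv : ∀ q : ℝ, HasDerivAt (fun s : ℝ => u (p + s • w)) 0 q := fun q => by
    have hq := hasDerivAt_comp_line_inner_gradient (p := p) (w := w) (t := q)
      (hu.differentiable two_ne_zero _)
    rwa [hconst q (huniv ▸ Set.mem_univ q), horth] at hq
  exact hrs (is_const_of_deriv_eq_zero (fun q => (hderiv q).differentiableAt)
    (fun q => (hderiv q).deriv) r s)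

end Line

lemma lap_eq_laplacian {N : ℕ} {u : EuclideanSpace ℝ (Fin N) → ℝ} {x : EuclideanSpace ℝ (Fin N)}
    (hu : DifferentiableAt ℝ (fderiv ℝ u) x) : Lap u x = Δ u x := by
  simp [laplacian_eq_iteratedFDeriv_orthonormalBasis u (EuclideanSpace.basisFun (Fin N) ℝ), Lap,
    Hess, iteratedFDeriv_two_apply, fderiv_clm_apply hu (differentiableAt_const _)]

theorem statement12_general {E : Type*} [NormedAddCommGroup E] [InnerProductSpace ℝ E]
    [FiniteDimensional ℝ E] {f : ℝ → ℝ} {u : E → ℝ} (hu : ContDiff ℝ 2 u)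
    (hpde : ∀ x, Δ u x + f (u x) = 0)
    (hV : ∀ x, ∇ u x ≠ 0 → fderiv ℝ (NormedSpace.normalize ∘ ∇ u) x = 0)
    {w p : E} (hne : ∃ s t : ℝ, u (p + s • w) ≠ u (p + t • w))
    {t₀ : ℝ} (ht₀ : ∇ u (p + t₀ • w) ≠ 0)
    {C : Set ℝ} (hC : connectedComponentIn {t : ℝ | ∇ u (p + t • w) ≠ 0} t₀ = C) :
    ∃ k : ℝ, k ≠ 0 ∧ (∀ t ∈ C, ⟪NormedSpace.normalize (∇ u (p + t • w)), w⟫ = k) ∧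
      (∀ t ∈ C, deriv (deriv fun s : ℝ => u (p + s • w)) t + k ^ 2 * f (u (p + t • w)) = 0) ∧
      (StrictMonoOn (fun t : ℝ => u (p + t • w)) C ∨
        StrictAntiOn (fun t : ℝ => u (p + t • w)) C) := by
  subst hC
  set C := connectedComponentIn {t : ℝ | ∇ u (p + t • w) ≠ 0} t₀
  set k := ⟪NormedSpace.normalize (∇ u (p + t₀ • w)), w⟫
  have hCU : ∀ t ∈ C, ∇ u (p + t • w) ≠ 0 := connectedComponentIn_subset _ _
  have hgrad : Differentiable ℝ (∇ u) := fun _ => differentiableAt_gradient hu.contDiffAt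
  have hk : ∀ t ∈ C, ⟪NormedSpace.normalize (∇ u (p + t • w)), w⟫ = k := fun t ht => by
    rw [normalize_comp_line_eq_of_mem_connectedComponentIn hgrad hV ht]
  have hk0 : k ≠ 0 := inner_normalize_gradient_ne_zero_of_comp_line_ne hu hV hne ht₀
  refine ⟨k, hk0, hk, fun t ht => ?_, ?_⟩
  · rw [deriv_deriv_comp_line_of_fderiv_normalize_eq_zero hu (hCU t ht) (hV _ (hCU t ht)),
      hk t ht, ← mul_add, hpde, mul_zero]
  · refine strictMonoOn_or_strictAntiOn_of_hasDerivAt_ne_zero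
      isPreconnected_connectedComponentIn.ordConnected.convex
      (fun t _ => hasDerivAt_comp_line_inner_gradient (hu.differentiable two_ne_zero _))
      fun t ht => ?_
    rw [← NormedSpace.norm_smul_normalize (∇ u (p + t • w)), real_inner_smul_left, hk t ht]
    exact mul_ne_zero (norm_ne_zero_iff.2 (hCU t ht)) hk0

end

/-- flat-space instance of Lemma 3.5(a). Along the line
`γ(t) = p + t w` (`‖w‖ = 1`), on a connected component `(a, b)` (endpoints in
`ℝ ∪ {±∞}`, modelled by `EReal`) of `{t | γ(t) ∈ U}`, the quantity `⟨V(γ(t)), w⟩` is a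
nonzero constant `k`, the profile `h = u ∘ γ` solves `h'' + k² f(h) = 0` there, and `h`
is strictly monotone on `(a, b)`. -/
theorem statement12 {N : ℕ} (hN : 1 ≤ N) (f : ℝ → ℝ) (hf : ContDiff ℝ 1 f)
    (u : EuclideanSpace ℝ (Fin N) → ℝ) (hu : ContDiff ℝ 3 u)
    (hpde : ∀ x, Lap u x + f (u x) = 0)
    (hDV : ∀ x, gradient u x ≠ 0 → fderiv ℝ (NGrad u) x = 0)
    (w p : EuclideanSpace ℝ (Fin N)) (hw : ‖w‖ = 1)
    (γ : ℝ → EuclideanSpace ℝ (Fin N)) (hγ : γ = fun t => p + t • w)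
    (h : ℝ → ℝ) (hh : h = u ∘ γ)
    (hnc : ∃ s t, h s ≠ h t)
    (t₀ : ℝ) (ht₀ : gradient u (γ t₀) ≠ 0)
    (a b : EReal)
    (hcomp : connectedComponentIn {t : ℝ | gradient u (γ t) ≠ 0} t₀ =
      {t : ℝ | a < (t : EReal) ∧ (t : EReal) < b}) :
    ∃ k : ℝ, k ≠ 0 ∧
      (∀ t : ℝ, a < (t : EReal) → (t : EReal) < b → ⟪NGrad u (γ t), w⟫ = k) ∧
      (∀ t : ℝ, a < (t : EReal) → (t : EReal) < b →
        deriv (deriv h) t + k ^ 2 * f (h t) = 0) ∧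
      (StrictMonoOn h {t : ℝ | a < (t : EReal) ∧ (t : EReal) < b} ∨
        StrictAntiOn h {t : ℝ | a < (t : EReal) ∧ (t : EReal) < b}) := by
  subst hγ hh
  have hu' : Differentiable ℝ (fderiv ℝ u) :=
    (hu.fderiv_right (m := 2) (by norm_num)).differentiable two_ne_zero
  obtain ⟨k, hk0, hk, hode, hmono⟩ := statement12_general (hu.of_le (by norm_num))
    (fun x => lap_eq_laplacian (hu' x) ▸ hpde x) hDV hnc ht₀ hcomp
  exact ⟨k, hk0, fun t hat htb => hk t ⟨hat, htb⟩, fun t hat htb => hode t ⟨hat, htb⟩, hmono⟩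
end
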